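/- arXiv:2501.05812 — 4 statements merged into one kernel-verified Lean document; each statement's English description precedes it below -/
import Mathlib

section
/- Suppose the complex is exact, i.e. ker d_q = range d_{q−1} for every 0 ≤ q ≤ m (so in particular ker d_0 = 0 and range d_{m−1} = ker d_m = V_m). Then for every cochain endomorphism (φ_q) one has ∑_{q=0}^m (−1)^q tr(φ_q) = 0. -/
/-!
An exact complex of projective modules ending in `V m → 0` splits, working down from `V m`: it has
a contracting homotopy, that is, maps `s q : V (q + 1) → V q` with `d s + s d = 1`. Hence
`tr φ = tr (φ d s) + tr (φ s d)` in each degree, and since `φ d = d φ`, cyclicity of the trace turns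
the first term in degree `q + 1` into the second one in degree `q`. The alternating sum telescopes
to `± tr (φ s d)` in degree `m`, where `d = 0`.
-/

theorem exists_comp_add_comp_eq_id_of_exact {R U V W : Type*} [Ring R]
    [AddCommGroup U] [Module R U] [AddCommGroup V] [Module R V] [AddCommGroup W] [Module R W]
    [Module.Projective R V] {f : U →ₗ[R] V} {g : V →ₗ[R] W} {t : W →ₗ[R] V}
    (hfg : Function.Exact f g) (ht : g ∘ₗ t ∘ₗ g = g) :
    ∃ s : V →ₗ[R] U, f ∘ₗ s + t ∘ₗ g = LinearMap.id := by
  let p : V →ₗ[R] V := LinearMap.id - t ∘ₗ g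
  have hgp : g ∘ₗ p = 0 := by rw [LinearMap.comp_sub, LinearMap.comp_id, ht, sub_self]
  have hrange (x : V) : p x ∈ LinearMap.range f := (hfg (p x)).mp (LinearMap.congr_fun hgp x)
  obtain ⟨s, hs⟩ := Module.projective_lifting_property f.rangeRestrict
    (p.codRestrict (LinearMap.range f) hrange) f.surjective_rangeRestrict
  have hfs : f ∘ₗ s = p :=
    LinearMap.ext fun x => congrArg Subtype.val (LinearMap.congr_fun hs x)
  exact ⟨s, by rw [hfs, sub_add_cancel]⟩

theorem comp_comp_eq_self_of_comp_add_comp_eq_id {R U V W : Type*} [Semiring R]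
    [AddCommMonoid U] [Module R U] [AddCommMonoid V] [Module R V] [AddCommMonoid W] [Module R W]
    {f : U →ₗ[R] V} {s : V →ₗ[R] U} {g : V →ₗ[R] W} {t : W →ₗ[R] V}
    (hst : f ∘ₗ s + t ∘ₗ g = LinearMap.id) (hgf : g ∘ₗ f = 0) :
    f ∘ₗ s ∘ₗ f = f :=
  calc f ∘ₗ s ∘ₗ f = (f ∘ₗ s + t ∘ₗ g) ∘ₗ f := by
        rw [LinearMap.add_comp, LinearMap.comp_assoc, LinearMap.comp_assoc, hgf,
          LinearMap.comp_zero, add_zero]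
    _ = f := by rw [hst, LinearMap.id_comp]

-- The first conjunct carries the induction, and it covers degree `m`, where no homotopy relation
-- is available.
theorem exists_contractingHomotopy {R : Type*} [Ring R] (m : ℕ) (V : ℕ → Type*)
    [∀ q, AddCommGroup (V q)] [∀ q, Module R (V q)] [∀ q, Module.Projective R (V q)]
    (d : ∀ q, V q →ₗ[R] V (q + 1)) (hdm : d m = 0)
    (hexact : ∀ q < m, Function.Exact (d q) (d (q + 1))) :
    ∃ s : ∀ q, V (q + 1) →ₗ[R] V q, (∀ q ≤ m, d q ∘ₗ s q ∘ₗ d q = d q) ∧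
      ∀ q < m, d q ∘ₗ s q + s (q + 1) ∘ₗ d (q + 1) = LinearMap.id := by
  induction m generalizing V with
  | zero => exact ⟨0, by simp [hdm], by simp⟩
  | succ m ih =>
    obtain ⟨t, htd, ht⟩ := ih (fun q => V (q + 1)) (fun q => d (q + 1)) hdm
      fun q hq => hexact (q + 1) (Nat.succ_lt_succ hq)
    have hexact₀ : Function.Exact (d 0) (d 1) := hexact 0 m.succ_pos
    obtain ⟨s₀, hs₀⟩ := exists_comp_add_comp_eq_id_of_exact hexact₀ (htd 0 m.zero_le)
    refine ⟨fun | 0 => s₀ | q + 1 => t q, ?_, ?_⟩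
    · rintro (_ | q) hq
      · exact comp_comp_eq_self_of_comp_add_comp_eq_id hs₀ hexact₀.linearMap_comp_eq_zero
      · exact htd q (Nat.le_of_succ_le_succ hq)
    · rintro (_ | q) hq
      · exact hs₀
      · exact ht q (Nat.lt_of_succ_lt_succ hq)

section Trace

variable {R : Type*} [CommRing R]

theorem trace_eq_trace_add_trace_of_comp_add_comp_eq_id {U V W : Type*}
    [AddCommGroup U] [Module R U] [Module.Free R U] [Module.Finite R U]
    [AddCommGroup V] [Module R V] [Module.Free R V] [Module.Finite R V]
    [AddCommMonoid W] [Module R W]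
    {f : U →ₗ[R] V} {s : V →ₗ[R] U} {g : V →ₗ[R] W} {t : W →ₗ[R] V}
    (hst : f ∘ₗ s + t ∘ₗ g = LinearMap.id)
    {φ : U →ₗ[R] U} {ψ : V →ₗ[R] V} (hφψ : ψ ∘ₗ f = f ∘ₗ φ) :
    LinearMap.trace R V ψ =
      LinearMap.trace R U (φ ∘ₗ s ∘ₗ f) + LinearMap.trace R V (ψ ∘ₗ t ∘ₗ g) := by
  have hcyclic : LinearMap.trace R V (ψ ∘ₗ f ∘ₗ s) = LinearMap.trace R U (φ ∘ₗ s ∘ₗ f) :=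
    calc LinearMap.trace R V (ψ ∘ₗ f ∘ₗ s)
        = LinearMap.trace R V (f ∘ₗ φ ∘ₗ s) := by
          rw [← LinearMap.comp_assoc, hφψ, LinearMap.comp_assoc]
      _ = LinearMap.trace R U (φ ∘ₗ s ∘ₗ f) := LinearMap.trace_comp_comm' (φ ∘ₗ s) f
  calc LinearMap.trace R V ψ
      = LinearMap.trace R V (ψ ∘ₗ (f ∘ₗ s + t ∘ₗ g)) := by rw [hst, LinearMap.comp_id]
    _ = LinearMap.trace R U (φ ∘ₗ s ∘ₗ f) + LinearMap.trace R V (ψ ∘ₗ t ∘ₗ g) := by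
      rw [LinearMap.comp_add, map_add, hcyclic]

variable (V : ℕ → Type*) [∀ q, AddCommGroup (V q)] [∀ q, Module R (V q)]
  [∀ q, Module.Free R (V q)] [∀ q, Module.Finite R (V q)]

theorem sum_neg_one_pow_mul_trace_of_contractingHomotopy (n : ℕ)
    (d : ∀ q, V q →ₗ[R] V (q + 1)) (s : ∀ q, V (q + 1) →ₗ[R] V q)
    (hs₀ : s 0 ∘ₗ d 0 = LinearMap.id)
    (hs : ∀ q < n, d q ∘ₗ s q + s (q + 1) ∘ₗ d (q + 1) = LinearMap.id)
    (φ : ∀ q, V q →ₗ[R] V q) (hφ : ∀ q < n, φ (q + 1) ∘ₗ d q = d q ∘ₗ φ q) :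
    ∑ q ∈ Finset.range (n + 1), (-1 : R) ^ q * LinearMap.trace R (V q) (φ q) =
      (-1) ^ n * LinearMap.trace R (V n) (φ n ∘ₗ s n ∘ₗ d n) := by
  induction n with
  | zero => simp [hs₀]
  | succ n ih =>
    rw [Finset.sum_range_succ,
      ih (fun q hq => hs q (hq.trans n.lt_succ_self)) fun q hq => hφ q (hq.trans n.lt_succ_self),
      trace_eq_trace_add_trace_of_comp_add_comp_eq_id (hs n n.lt_succ_self) (hφ n n.lt_succ_self)]
    ring

theorem stmt8_general (m : ℕ) (d : ∀ q, V q →ₗ[R] V (q + 1))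
    (hdm : d m = 0)
    (hexact0 : LinearMap.ker (d 0) = ⊥)
    (hexact : ∀ q < m, LinearMap.ker (d (q + 1)) = LinearMap.range (d q))
    (φ : ∀ q, V q →ₗ[R] V q)
    (hφ : ∀ q < m, φ (q + 1) ∘ₗ d q = d q ∘ₗ φ q) :
    ∑ q ∈ Finset.range (m + 1), (-1 : R) ^ q * LinearMap.trace R (V q) (φ q) = 0 := by
  obtain ⟨s, hsd, hs⟩ := exists_contractingHomotopy m V d hdm
    fun q hq => LinearMap.exact_iff.mpr (hexact q hq)
  have hs₀ : s 0 ∘ₗ d 0 = LinearMap.id :=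
    LinearMap.ext fun x =>
      LinearMap.ker_eq_bot.mp hexact0 (LinearMap.congr_fun (hsd 0 m.zero_le) x)
  rw [sum_neg_one_pow_mul_trace_of_contractingHomotopy V m d s hs₀ hs φ hφ, hdm,
    LinearMap.comp_zero, LinearMap.comp_zero, map_zero, mul_zero]

end Trace

/-- Let `V_0, …, V_m` be finite-dimensional `𝕜`-vector spaces with maps
`d_q : V_q → V_{q+1}` satisfying `d_{q+1} ∘ d_q = 0` (conventions `d_{-1} = 0`,
`d_m = 0`). If the complex is exact (`ker d_q = range d_{q-1}` for all `0 ≤ q ≤ m`),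
then every cochain endomorphism `(φ_q)` satisfies `∑ (−1)^q tr(φ_q) = 0`. -/
theorem stmt8 {𝕜 : Type*} [Field 𝕜] (m : ℕ) (hm : 1 ≤ m)
    (V : ℕ → Type*) [∀ q, AddCommGroup (V q)] [∀ q, Module 𝕜 (V q)]
    [∀ q, FiniteDimensional 𝕜 (V q)]
    (d : ∀ q, V q →ₗ[𝕜] V (q + 1))
    (hdm : d m = 0)
    (hdd : ∀ q < m, d (q + 1) ∘ₗ d q = 0)
    (hexact0 : LinearMap.ker (d 0) = ⊥)
    (hexact : ∀ q < m, LinearMap.ker (d (q + 1)) = LinearMap.range (d q))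
    (φ : ∀ q, V q →ₗ[𝕜] V q)
    (hφ : ∀ q < m, φ (q + 1) ∘ₗ d q = d q ∘ₗ φ q) :
    ∑ q ∈ Finset.range (m + 1), (-1 : 𝕜) ^ q * LinearMap.trace 𝕜 (V q) (φ q) = 0 :=
  stmt8_general V m d hdm hexact0 hexact φ hφ
end

section
/- For every cochain endomorphism (φ_q), each φ_q maps ker d_q into itself and maps range d_{q−1} into itself, hence induces a linear endomorphism H(φ)_q of the cohomology space H^q = ker d_q / range d_{q−1}; and the Hopf trace formula holds: ∑_{q=0}^m (−1)^q tr(φ_q) = ∑_{q=0}^m (−1)^q tr(H(φ)_q). -/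
/-- `range d_{q-1}`, with the convention `d_{-1} = 0` (so the value at `0` is `⊥`). -/
def rangePred {𝕜 : Type*} [Field 𝕜] {V : ℕ → Type*} [∀ q, AddCommGroup (V q)]
    [∀ q, Module 𝕜 (V q)] (d : ∀ q, V q →ₗ[𝕜] V (q + 1)) : ∀ q, Submodule 𝕜 (V q)
  | 0 => ⊥
  | (q + 1) => LinearMap.range (d q)

/-!
Trace is additive on short exact sequences. Applied to `ker d_q → V_q → range d_q` and to
`range d_{q-1} → ker d_q → H^q` it gives `tr φ_q = tr H(φ)_q + r_q + r_{q+1}`, where `r_q` is the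
trace of `φ_q` on `range d_{q-1}`, and the alternating sum of `r_q + r_{q+1}` telescopes.
-/

section Trace

variable {R U V W : Type*} [CommRing R] [AddCommGroup U] [Module R U] [AddCommGroup V] [Module R V]
  [AddCommGroup W] [Module R W]

theorem trace_eq_trace_add_trace_of_exact [Module.Free R U] [Module.Finite R U]
    [Module.Free R W] [Module.Finite R W] {i : U →ₗ[R] V} {p : V →ₗ[R] W}
    (hip : Function.Exact i p) (hi : Function.Injective i) (hp : Function.Surjective p)
    {a : U →ₗ[R] U} {f : V →ₗ[R] V} {b : W →ₗ[R] W}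
    (hia : f ∘ₗ i = i ∘ₗ a) (hpb : p ∘ₗ f = b ∘ₗ p) :
    LinearMap.trace R V f = LinearMap.trace R U a + LinearMap.trace R W b := by
  obtain ⟨s, hs⟩ := Module.projective_lifting_property p LinearMap.id hp
  obtain ⟨e, rfl, rfl⟩ := hip.splitSurjectiveEquiv hi ⟨s, hs⟩
  have : Module.Free R V := .of_equiv e.symm
  have : Module.Finite R V := .equiv e.symm
  let r : V →ₗ[R] U := LinearMap.fst R U W ∘ₗ e
  let t : W →ₗ[R] V := e.symm ∘ₗ LinearMap.inr R U W
  set i : U →ₗ[R] V := e.symm ∘ₗ LinearMap.inl R U W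
  set p : V →ₗ[R] W := LinearMap.snd R U W ∘ₗ e
  have h_ri : r ∘ₗ i = LinearMap.id := by ext; simp [r, i]
  have h_pt : p ∘ₗ t = LinearMap.id := by ext; simp [p, t]
  have h_decomp : f = (f ∘ₗ i) ∘ₗ r + (f ∘ₗ t) ∘ₗ p := by
    ext v
    simp [i, r, t, p, ← map_add]
  calc LinearMap.trace R V f
      = LinearMap.trace R V ((f ∘ₗ i) ∘ₗ r) + LinearMap.trace R V ((f ∘ₗ t) ∘ₗ p) := by
        rw [← map_add, ← h_decomp]
    _ = LinearMap.trace R U (r ∘ₗ f ∘ₗ i) + LinearMap.trace R W (p ∘ₗ f ∘ₗ t) := by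
        rw [LinearMap.trace_comp_comm' r, LinearMap.trace_comp_comm' p]
    _ = LinearMap.trace R U a + LinearMap.trace R W b := by
        rw [hia, ← LinearMap.comp_assoc, h_ri, LinearMap.id_comp, ← LinearMap.comp_assoc, hpb,
          LinearMap.comp_assoc, h_pt, LinearMap.comp_id]

theorem trace_restrict_of_eq_bot {P : Submodule R V} (hP : P = ⊥) {φ : V →ₗ[R] V}
    (hφ : ∀ x ∈ P, φ x ∈ P) : LinearMap.trace R P (φ.restrict hφ) = 0 := by
  subst hP
  rw [Subsingleton.elim (φ.restrict hφ) 0, map_zero]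

end Trace

section Intertwining

variable {R V W : Type*} [Semiring R] [AddCommMonoid V] [Module R V] [AddCommMonoid W] [Module R W]
  {f : V →ₗ[R] W} {φ : V →ₗ[R] V} {χ : W →ₗ[R] W}

theorem map_mem_ker_of_comp_eq (h : χ ∘ₗ f = f ∘ₗ φ) {x : V} (hx : x ∈ LinearMap.ker f) :
    φ x ∈ LinearMap.ker f := by
  rw [LinearMap.mem_ker] at hx ⊢
  rw [← LinearMap.comp_apply, ← h, LinearMap.comp_apply, hx, map_zero]

theorem map_mem_range_of_comp_eq (h : χ ∘ₗ f = f ∘ₗ φ) {y : W} (hy : y ∈ LinearMap.range f) :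
    χ y ∈ LinearMap.range f := by
  obtain ⟨x, rfl⟩ := hy
  exact ⟨φ x, (LinearMap.congr_fun h x).symm⟩

end Intertwining

section VectorSpace

variable {𝕜 V W : Type*} [Field 𝕜] [AddCommGroup V] [Module 𝕜 V] [AddCommGroup W] [Module 𝕜 W]

theorem trace_eq_trace_restrict_ker_add_trace_restrict_range [FiniteDimensional 𝕜 V]
    {f : V →ₗ[𝕜] W} {φ : V →ₗ[𝕜] V} {χ : W →ₗ[𝕜] W} (h : χ ∘ₗ f = f ∘ₗ φ) :
    LinearMap.trace 𝕜 V φ =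
      LinearMap.trace 𝕜 (LinearMap.ker f) (φ.restrict fun _ ↦ map_mem_ker_of_comp_eq h) +
      LinearMap.trace 𝕜 (LinearMap.range f) (χ.restrict fun _ ↦ map_mem_range_of_comp_eq h) := by
  have h_exact : Function.Exact (LinearMap.ker f).subtype f.rangeRestrict :=
    LinearMap.exact_iff.2 (by rw [LinearMap.ker_rangeRestrict, Submodule.range_subtype])
  refine trace_eq_trace_add_trace_of_exact h_exact (Submodule.subtype_injective _)
    f.surjective_rangeRestrict rfl ?_
  ext x
  exact (LinearMap.congr_fun h x).symm

theorem trace_restrict_eq_trace_restrict_add_trace_mapQ {P K : Submodule 𝕜 V}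
    [FiniteDimensional 𝕜 K] (hPK : P ≤ K) {φ : V →ₗ[𝕜] V} (hP : ∀ x ∈ P, φ x ∈ P)
    (hK : ∀ x ∈ K, φ x ∈ K) :
    LinearMap.trace 𝕜 K (φ.restrict hK) = LinearMap.trace 𝕜 P (φ.restrict hP) +
      LinearMap.trace 𝕜 (K ⧸ P.comap K.subtype)
        (Submodule.mapQ _ _ (φ.restrict hK) fun x hx ↦ hP x hx) := by
  have : FiniteDimensional 𝕜 P := Submodule.finiteDimensional_of_le hPK
  have h_exact : Function.Exact (Submodule.inclusion hPK) (P.comap K.subtype).mkQ :=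
    LinearMap.exact_iff.2 (by rw [Submodule.ker_mkQ, Submodule.range_inclusion])
  exact trace_eq_trace_add_trace_of_exact h_exact (Submodule.inclusion_injective hPK)
    (Submodule.mkQ_surjective _) rfl rfl

end VectorSpace

theorem sum_neg_one_pow_mul_add_succ {R : Type*} [CommRing R] (r : ℕ → R) (n : ℕ) :
    ∑ q ∈ Finset.range n, (-1) ^ q * (r q + r (q + 1)) = r 0 - (-1) ^ n * r n := by
  calc ∑ q ∈ Finset.range n, (-1) ^ q * (r q + r (q + 1))
      = ∑ q ∈ Finset.range n, ((-1) ^ q * r q - (-1) ^ (q + 1) * r (q + 1)) :=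
        Finset.sum_congr rfl fun q _ ↦ by ring
    _ = r 0 - (-1) ^ n * r n := by
        rw [Finset.sum_range_sub', pow_zero, one_mul]

section Cochain

variable {𝕜 : Type*} [Field 𝕜] {V : ℕ → Type*} [∀ q, AddCommGroup (V q)] [∀ q, Module 𝕜 (V q)]
  {d : ∀ q, V q →ₗ[𝕜] V (q + 1)} {φ : ∀ q, V q →ₗ[𝕜] V q}

/-- The cohomology space `H^q = ker d_q / range d_{q-1}`. Since `d ∘ d = 0` is not built in, it is
the quotient of `ker d_q` by its intersection with `range d_{q-1}`. -/
abbrev CochainCohomology (d : ∀ q, V q →ₗ[𝕜] V (q + 1)) (q : ℕ) : Type _ :=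
  LinearMap.ker (d q) ⧸ (rangePred d q).comap (LinearMap.ker (d q)).subtype

theorem rangePred_le_ker {m : ℕ} (hdd : ∀ q < m, d (q + 1) ∘ₗ d q = 0) {q : ℕ} (hq : q ≤ m) :
    rangePred d q ≤ LinearMap.ker (d q) := by
  cases q with
  | zero => exact bot_le
  | succ j => exact LinearMap.range_le_ker_iff.2 (hdd j hq)

theorem map_mem_rangePred (hφ : ∀ q, φ (q + 1) ∘ₗ d q = d q ∘ₗ φ q) (q : ℕ) :
    ∀ x ∈ rangePred d q, φ q x ∈ rangePred d q := by
  cases q with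
  | zero =>
    rintro x (rfl : x = 0)
    exact (map_zero (φ 0)).symm ▸ Submodule.zero_mem _
  | succ j => exact fun _ ↦ map_mem_range_of_comp_eq (hφ j)

/-- The endomorphism `H(φ)_q` of `H^q` induced by a cochain endomorphism `φ`. -/
def cochainCohomologyMap (hφ : ∀ q, φ (q + 1) ∘ₗ d q = d q ∘ₗ φ q) (q : ℕ) :
    CochainCohomology d q →ₗ[𝕜] CochainCohomology d q :=
  Submodule.mapQ _ _ ((φ q).restrict fun _ ↦ map_mem_ker_of_comp_eq (hφ q))
    fun x hx ↦ map_mem_rangePred hφ q x hx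

theorem trace_eq_trace_cochainCohomologyMap_add [∀ q, FiniteDimensional 𝕜 (V q)]
    (hφ : ∀ q, φ (q + 1) ∘ₗ d q = d q ∘ₗ φ q) {q : ℕ}
    (hq : rangePred d q ≤ LinearMap.ker (d q)) :
    LinearMap.trace 𝕜 (V q) (φ q) = LinearMap.trace 𝕜 _ (cochainCohomologyMap hφ q) +
      (LinearMap.trace 𝕜 _ ((φ q).restrict (map_mem_rangePred hφ q)) +
        LinearMap.trace 𝕜 _ ((φ (q + 1)).restrict (map_mem_rangePred hφ (q + 1)))) := by
  rw [trace_eq_trace_restrict_ker_add_trace_restrict_range (hφ q),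
    trace_restrict_eq_trace_restrict_add_trace_mapQ hq (map_mem_rangePred hφ q), add_assoc]
  exact add_left_comm _ _ _

theorem sum_trace_eq_sum_trace_cochainCohomologyMap_sub [∀ q, FiniteDimensional 𝕜 (V q)]
    (hφ : ∀ q, φ (q + 1) ∘ₗ d q = d q ∘ₗ φ q) {n : ℕ}
    (hd : ∀ q < n, rangePred d q ≤ LinearMap.ker (d q)) :
    ∑ q ∈ Finset.range n, (-1 : 𝕜) ^ q * LinearMap.trace 𝕜 (V q) (φ q) =
      ∑ q ∈ Finset.range n, (-1 : 𝕜) ^ q * LinearMap.trace 𝕜 _ (cochainCohomologyMap hφ q) -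
        (-1) ^ n * LinearMap.trace 𝕜 _ ((φ n).restrict (map_mem_rangePred hφ n)) := by
  let r (q : ℕ) : 𝕜 := LinearMap.trace 𝕜 _ ((φ q).restrict (map_mem_rangePred hφ q))
  have h_r0 : r 0 = 0 := trace_restrict_of_eq_bot rfl _
  calc ∑ q ∈ Finset.range n, (-1 : 𝕜) ^ q * LinearMap.trace 𝕜 (V q) (φ q)
      = ∑ q ∈ Finset.range n, ((-1) ^ q * LinearMap.trace 𝕜 _ (cochainCohomologyMap hφ q) +
          (-1) ^ q * (r q + r (q + 1))) :=
        Finset.sum_congr rfl fun q hq ↦ by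
          rw [trace_eq_trace_cochainCohomologyMap_add hφ (hd q (Finset.mem_range.1 hq)), mul_add]
    _ = ∑ q ∈ Finset.range n, (-1) ^ q * LinearMap.trace 𝕜 _ (cochainCohomologyMap hφ q) -
          (-1) ^ n * r n := by
        rw [Finset.sum_add_distrib, sum_neg_one_pow_mul_add_succ, h_r0, zero_sub, sub_eq_add_neg]

-- Cutting `φ` off to `0` above degree `m` makes it commute with `d` everywhere because `d m = 0`.
theorem exists_cochainEndomorphism_eq_of_le {m : ℕ} (hdm : d m = 0)
    (hφ : ∀ q < m, φ (q + 1) ∘ₗ d q = d q ∘ₗ φ q) :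
    ∃ φ' : ∀ q, V q →ₗ[𝕜] V q,
      (∀ q, φ' (q + 1) ∘ₗ d q = d q ∘ₗ φ' q) ∧ ∀ q ≤ m, φ' q = φ q := by
  refine ⟨fun q ↦ if q ≤ m then φ q else 0, fun q ↦ ?_, fun q hq ↦ if_pos hq⟩
  rcases lt_trichotomy q m with hq | rfl | hq
  · simp only [if_pos hq.le, if_pos (Nat.succ_le_of_lt hq), hφ q hq]
  · simp only [hdm, LinearMap.comp_zero, LinearMap.zero_comp]
  · simp only [if_neg hq.not_ge, if_neg (hq.trans (Nat.lt_succ_self q)).not_ge,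
      LinearMap.comp_zero, LinearMap.zero_comp]

end Cochain

/-- For every cochain endomorphism `(φ_q)` of a finite complex of finite-dimensional
vector spaces, each `φ_q` maps `ker d_q` into itself and `range d_{q-1}` into itself,
hence induces an endomorphism `ψ_q` of `H^q = ker d_q / range d_{q-1}`, and the Hopf
trace formula `∑ (−1)^q tr(φ_q) = ∑ (−1)^q tr(ψ_q)` holds. -/
theorem stmt9 {𝕜 : Type*} [Field 𝕜] (m : ℕ) (hm : 1 ≤ m)
    (V : ℕ → Type*) [∀ q, AddCommGroup (V q)] [∀ q, Module 𝕜 (V q)]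
    [∀ q, FiniteDimensional 𝕜 (V q)]
    (d : ∀ q, V q →ₗ[𝕜] V (q + 1))
    (hdm : d m = 0)
    (hdd : ∀ q < m, d (q + 1) ∘ₗ d q = 0)
    (φ : ∀ q, V q →ₗ[𝕜] V q)
    (hφ : ∀ q < m, φ (q + 1) ∘ₗ d q = d q ∘ₗ φ q) :
    (∀ q ≤ m, ∀ x ∈ LinearMap.ker (d q), φ q x ∈ LinearMap.ker (d q)) ∧
    (∀ q ≤ m, ∀ x ∈ rangePred d q, φ q x ∈ rangePred d q) ∧
    ∃ ψ : ∀ q, (LinearMap.ker (d q) ⧸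
          (rangePred d q).comap (LinearMap.ker (d q)).subtype) →ₗ[𝕜]
        (LinearMap.ker (d q) ⧸ (rangePred d q).comap (LinearMap.ker (d q)).subtype),
      (∀ q ≤ m, ∀ (x : LinearMap.ker (d q)) (hx : φ q (x : V q) ∈ LinearMap.ker (d q)),
        ψ q (Submodule.Quotient.mk x) = Submodule.Quotient.mk ⟨φ q (x : V q), hx⟩) ∧
      ∑ q ∈ Finset.range (m + 1), (-1 : 𝕜) ^ q * LinearMap.trace 𝕜 (V q) (φ q) =
        ∑ q ∈ Finset.range (m + 1), (-1 : 𝕜) ^ q *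
          LinearMap.trace 𝕜 _ (ψ q) := by
  obtain ⟨φ', hφ', h_eq⟩ := exists_cochainEndomorphism_eq_of_le hdm hφ
  have h_complex : ∀ q < m + 1, rangePred d q ≤ LinearMap.ker (d q) := fun q hq ↦
    rangePred_le_ker hdd (Nat.lt_succ_iff.1 hq)
  have h_last : rangePred d (m + 1) = ⊥ := LinearMap.range_eq_bot.2 hdm
  refine ⟨fun q hq x hx ↦ ?_, fun q hq x hx ↦ ?_, cochainCohomologyMap hφ', fun q hq x hx ↦ ?_, ?_⟩
  · exact h_eq q hq ▸ map_mem_ker_of_comp_eq (hφ' q) hx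
  · exact h_eq q hq ▸ map_mem_rangePred hφ' q x hx
  · exact congrArg Submodule.Quotient.mk (Subtype.ext (LinearMap.congr_fun (h_eq q hq) x))
  · calc ∑ q ∈ Finset.range (m + 1), (-1 : 𝕜) ^ q * LinearMap.trace 𝕜 (V q) (φ q)
        = ∑ q ∈ Finset.range (m + 1), (-1 : 𝕜) ^ q * LinearMap.trace 𝕜 (V q) (φ' q) :=
          Finset.sum_congr rfl fun q hq ↦ by rw [h_eq q (Finset.mem_range_succ_iff.1 hq)]
      _ = ∑ q ∈ Finset.range (m + 1), (-1 : 𝕜) ^ q *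
            LinearMap.trace 𝕜 _ (cochainCohomologyMap hφ' q) := by
          rw [sum_trace_eq_sum_trace_cochainCohomologyMap_sub hφ' h_complex,
            trace_restrict_of_eq_bot h_last, mul_zero, sub_zero]
end

section
/- Let E be a finite-dimensional real normed vector space. Suppose given maps g_j : E → E (j ∈ ℕ), continuous linear maps A_j : E → E and A : E → E with A_j → A in operator norm, and constants C, r > 0 such that ‖g_j(v) − A_j v‖ ≤ C‖v‖² for all j and all v with ‖v‖ ≤ r. If (v_j) is a sequence of nonzero vectors with v_j → 0 and g_j(v_j) = v_j for every j, then there exists a unit vector u ∈ E with A u = u; in particular A − id is not injective. -/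
open Filter

/-!
Since `g_j (v_j) = v_j`, we have `v_j - L v_j = (g_j (v_j) - A_j v_j) + (A_j v_j - L v_j)`, and both
summands are `o(v_j)`. So `L - id` is not bounded below, whereas an injective linear map on a
finite-dimensional space is.
-/

open Asymptotics Topology

theorem isLittleO_apply_sub_apply_of_tendsto {ι 𝕜 E F : Type*} {l : Filter ι}
    [NontriviallyNormedField 𝕜]
    [SeminormedAddCommGroup E] [NormedSpace 𝕜 E] [SeminormedAddCommGroup F] [NormedSpace 𝕜 F]
    {A : ι → E →L[𝕜] F} {L : E →L[𝕜] F} (hA : Tendsto A l (𝓝 L)) (v : ι → E) :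
    (fun i ↦ A i (v i) - L (v i)) =o[l] v := by
  have hnorm : (fun i ↦ ‖A i - L‖) =o[l] (1 : ι → ℝ) :=
    (isLittleO_one_iff ℝ).2 (tendsto_iff_norm_sub_tendsto_zero.1 hA)
  have hprod : (fun i ↦ ‖A i - L‖ * ‖v i‖) =o[l] v := by
    simpa using hnorm.mul_isBigO (isBigO_refl (fun i ↦ ‖v i‖) l)
  exact (IsBigO.of_norm_le fun i ↦ (A i - L).le_opNorm (v i)).trans_isLittleO hprod

theorem not_injective_of_isLittleO_apply {ι 𝕜 E F : Type*} {l : Filter ι}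
    [NontriviallyNormedField 𝕜] [CompleteSpace 𝕜]
    [NormedAddCommGroup E] [NormedSpace 𝕜 E] [FiniteDimensional 𝕜 E]
    [NormedAddCommGroup F] [NormedSpace 𝕜 F]
    {T : E →L[𝕜] F} {v : ι → E} (hv : ∃ᶠ i in l, v i ≠ 0)
    (hT : (fun i ↦ T (v i)) =o[l] v) : ¬ Function.Injective T := by
  intro hinj
  obtain ⟨K, -, hK⟩ := (T : E →ₗ[𝕜] F).injective_iff_antilipschitz.1 hinj
  have hbelow : v =O[l] fun i ↦ T (v i) :=
    .of_bound K (.of_forall fun i ↦ by simpa using hK.le_mul_dist (v i) 0)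
  exact isLittleO_irrefl hv (hbelow.trans_isLittleO hT)

theorem isLittleO_snd_of_norm_le_mul_pow {ι E F : Type*} [SeminormedAddCommGroup E]
    [SeminormedAddCommGroup F] {l : Filter ι} {h : ι → E → F} {C r : ℝ} {n : ℕ} (hn : 1 < n)
    (hr : 0 < r) (hh : ∀ i v, ‖v‖ ≤ r → ‖h i v‖ ≤ C * ‖v‖ ^ n) :
    (fun p : ι × E ↦ h p.1 p.2) =o[l ×ˢ 𝓝 0] Prod.snd := by
  have hsmall : ∀ᶠ p : ι × E in l ×ˢ 𝓝 0, ‖p.2‖ ≤ r :=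
    (tendsto_norm_zero.comp tendsto_snd).eventually_le_const hr
  have hbound : (fun p : ι × E ↦ h p.1 p.2) =O[l ×ˢ 𝓝 0] fun p ↦ ‖p.2‖ ^ n :=
    .of_bound C (hsmall.mono fun p hp ↦ by simpa using hh p.1 p.2 hp)
  exact hbound.trans_isLittleO ((isLittleO_norm_pow_id hn).comp_tendsto tendsto_snd)

theorem exists_norm_eq_one_apply_eq_zero_of_not_injective {𝕜 E F : Type*} [RCLike 𝕜]
    [NormedAddCommGroup E] [NormedSpace 𝕜 E] [AddCommGroup F] [Module 𝕜 F]
    {T : E →ₗ[𝕜] F} (hT : ¬ Function.Injective T) : ∃ u, ‖u‖ = 1 ∧ T u = 0 := by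
  obtain ⟨w, hTw, hw⟩ : ∃ w, T w = 0 ∧ w ≠ 0 := by
    simpa [injective_iff_map_eq_zero] using hT
  exact ⟨(‖w‖⁻¹ : 𝕜) • w, norm_smul_inv_norm hw, by rw [map_smul, hTw, smul_zero]⟩

theorem stmt11_general {ι 𝕜 E : Type*} [RCLike 𝕜] [NormedAddCommGroup E] [NormedSpace 𝕜 E]
    [FiniteDimensional 𝕜 E] {l : Filter ι}
    {g : ι → E → E} {A : ι → E →L[𝕜] E} {L : E →L[𝕜] E} (hA : Tendsto A l (𝓝 L))
    (hg : (fun p : ι × E ↦ g p.1 p.2 - A p.1 p.2) =o[l ×ˢ 𝓝 0] Prod.snd)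
    {v : ι → E} (hv0 : ∃ᶠ i in l, v i ≠ 0) (hvlim : Tendsto v l (𝓝 0))
    (hfix : ∀ᶠ i in l, g i (v i) = v i) :
    (∃ u : E, ‖u‖ = 1 ∧ L u = u) ∧
      ¬ Function.Injective ⇑(L - ContinuousLinearMap.id 𝕜 E) := by
  have hgA : (fun i ↦ g i (v i) - A i (v i)) =o[l] v :=
    hg.comp_tendsto (tendsto_id.prodMk hvlim)
  have hL : (fun i ↦ (L - .id 𝕜 E) (v i)) =o[l] v := by
    refine (hgA.add (isLittleO_apply_sub_apply_of_tendsto hA v)).neg_left.congr' ?_ .rfl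
    filter_upwards [hfix] with i hi
    simp [hi]
  have hninj := not_injective_of_isLittleO_apply hv0 hL
  obtain ⟨u, hu, hLu⟩ := exists_norm_eq_one_apply_eq_zero_of_not_injective
    (T := (L - .id 𝕜 E : E →L[𝕜] E).toLinearMap) hninj
  exact ⟨⟨u, hu, sub_eq_zero.1 hLu⟩, hninj⟩

/-- Let `E` be a finite-dimensional real normed space, `g_j : E → E`, `A_j → A` in
operator norm, with `‖g_j v − A_j v‖ ≤ C‖v‖²` for `‖v‖ ≤ r`. If `v_j ≠ 0`, `v_j → 0`
and `g_j (v_j) = v_j` for all `j`, then there is a unit vector `u` with `A u = u`;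
in particular `A − id` is not injective. -/
theorem stmt11 {E : Type*} [NormedAddCommGroup E] [NormedSpace ℝ E]
    [FiniteDimensional ℝ E]
    (g : ℕ → E → E) (A : ℕ → E →L[ℝ] E) (L : E →L[ℝ] E)
    (hA : Tendsto (fun j => ‖A j - L‖) atTop (nhds 0))
    (C r : ℝ) (hC : 0 < C) (hr : 0 < r)
    (hg : ∀ j : ℕ, ∀ v : E, ‖v‖ ≤ r → ‖g j v - A j v‖ ≤ C * ‖v‖ ^ 2)
    (v : ℕ → E) (hv0 : ∀ j, v j ≠ 0) (hvlim : Tendsto v atTop (nhds 0))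
    (hfix : ∀ j, g j (v j) = v j) :
    (∃ u : E, ‖u‖ = 1 ∧ L u = u) ∧
      ¬ Function.Injective ⇑(L - ContinuousLinearMap.id ℝ E) :=
  stmt11_general (tendsto_iff_norm_sub_tendsto_zero.2 hA)
    (isLittleO_snd_of_norm_le_mul_pow one_lt_two hr hg) (.of_forall hv0) hvlim (.of_forall hfix)
end

section
/- Let n ≥ 1, let U ⊆ ℝⁿ be open with 0 ∈ U, and let φ : U → ℝⁿ be an injective continuously differentiable map with φ(0) = 0 and det Dφ(x) ≠ 0 for every x ∈ U. Let χ : ℝⁿ → ℝ be continuous with compact support and ∫_{ℝⁿ} χ(y) dy = 1, and let w : ℝⁿ → ℝ be continuous with compact support contained in U. Then, as k → ∞ over the natural numbers, ∫_U kⁿ χ(k φ(x)) w(x) dx converges to w(0) / |det Dφ(0)|. -/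
open MeasureTheory Filter

/-!
After the substitution `x = c⁻¹ • z` the integral becomes `∫ χ (c • φ (c⁻¹ • z)) * w (c⁻¹ • z) dz`,
whose integrand tends pointwise to `χ (Dφ(0) z) * w 0`, because `c • φ (c⁻¹ • z)` is a difference
quotient of `φ` at `0`. On the support of `w` the only zero of `φ` is `0`, where the derivative is
invertible, so there `‖x‖ ≤ A * ‖φ x‖`: the rescaled integrands all live in one ball and dominated
convergence applies. The linear change of variables `y = Dφ(0) z` evaluates the limit.
-/

section Rescaling

open Set Module Asymptotics Topology

theorem isBigO_id_principal_of_hasFDerivAt_zero {𝕜 E F : Type*} [NontriviallyNormedField 𝕜]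
    [NormedAddCommGroup E] [NormedSpace 𝕜 E] [NormedAddCommGroup F] [NormedSpace 𝕜 F]
    {φ : E → F} {L : E →L[𝕜] F} {K : Set E} (hK : IsCompact K)
    (hφ : ContinuousOn φ K) (hzero : ∀ x ∈ K, φ x = 0 → x = 0) (hφ0 : φ 0 = 0)
    (hL : HasFDerivAt φ L 0) (hL_ind : IsInducing L) :
    (fun x => x) =O[𝓟 K] φ := by
  have near_zero : (fun x => x) =O[𝓝 0] φ := by
    simpa [hφ0] using (hL.isTheta_sub hL_ind).isBigO_symm
  obtain ⟨A, hA⟩ := near_zero.bound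
  obtain ⟨V, hV, hV_open, h0V⟩ := eventually_nhds_iff.1 hA
  have on_nhds : (fun x => x) =O[𝓟 V] φ := isBigO_principal.2 ⟨A, hV⟩
  have hKV : IsCompact (K \ V) := hK.diff hV_open
  have away : (fun x => x) =O[𝓟 (K \ V)] φ :=
    (continuousOn_id.isBigO_principal hKV (c := (1 : ℝ)) (by simp)).trans <|
      (hφ.mono sdiff_subset).isBigO_rev_principal hKV
        (fun x hx hx0 => hx.2 (hzero x hx.1 hx0 ▸ h0V)) 1
  refine (on_nhds.sup away).mono ?_
  rw [sup_principal, principal_mono, union_sdiff_self]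
  exact subset_union_right

variable {E F G : Type*} [NormedAddCommGroup E] [NormedSpace ℝ E]
  [NormedAddCommGroup F] [NormedSpace ℝ F] [NormedAddCommGroup G] [NormedSpace ℝ G]
  {φ : E → F} {L : E →L[ℝ] F} {χ : F → ℝ} {w : E → G}

theorem continuous_comp_smul_of_tsupport {X : Type*} [TopologicalSpace X] {φ : X → F} {w : X → G}
    (hχ : Continuous χ) (hw : Continuous w) (hφ : ∀ x ∈ tsupport w, ContinuousAt φ x) (c : ℝ) :
    Continuous fun x => χ (c • φ x) • w x := by
  refine continuous_of_tsupport fun x hx => ?_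
  have hφx := hφ x (tsupport_smul_subset_right _ w hx)
  exact (hχ.continuousAt.comp (hφx.const_smul c)).smul hw.continuousAt

theorem tendsto_comp_rescale_smul (hφ0 : φ 0 = 0) (hL : HasFDerivAt φ L 0)
    (hχ : Continuous χ) (hw : ContinuousAt w 0) (z : E) :
    Tendsto (fun c : ℝ => χ (c • φ (c⁻¹ • z)) • w (c⁻¹ • z)) atTop (𝓝 (χ (L z) • w 0)) := by
  have hφz : Tendsto (fun c : ℝ => c • φ (c⁻¹ • z)) atTop (𝓝 (L z)) := by
    simpa [hφ0] using hL.lim_real z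
  have hz : Tendsto (fun c : ℝ => c⁻¹ • z) atTop (𝓝 0) := by
    simpa using (tendsto_inv_atTop_zero (𝕜 := ℝ)).smul_const z
  exact ((hχ.tendsto _).comp hφz).smul (hw.tendsto.comp hz)

theorem norm_le_of_comp_rescale_smul_ne_zero {A R c : ℝ} {z : E} (hA : 0 ≤ A) (hc : 0 < c)
    (hφ : ∀ x ∈ tsupport w, ‖x‖ ≤ A * ‖φ x‖) (hχR : ∀ y ∈ tsupport χ, ‖y‖ ≤ R)
    (hz : χ (c • φ (c⁻¹ • z)) • w (c⁻¹ • z) ≠ 0) : ‖z‖ ≤ A * R := by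
  have hw_mem : c⁻¹ • z ∈ tsupport w := subset_tsupport w (right_ne_zero_of_smul hz)
  have hχ_mem : c • φ (c⁻¹ • z) ∈ tsupport χ := subset_tsupport χ (left_ne_zero_of_smul hz)
  calc ‖z‖ = c * ‖c⁻¹ • z‖ := by
        rw [← norm_smul_of_nonneg hc.le, smul_inv_smul₀ hc.ne']
    _ ≤ c * (A * ‖φ (c⁻¹ • z)‖) := by gcongr; exact hφ _ hw_mem
    _ = A * ‖c • φ (c⁻¹ • z)‖ := by rw [norm_smul_of_nonneg hc.le]; ring
    _ ≤ A * R := by gcongr; exact hχR _ hχ_mem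

section Integral

variable [FiniteDimensional ℝ E] [MeasurableSpace E] [BorelSpace E]

theorem exists_integrable_bound_comp_rescale_smul (μ : Measure E) [IsFiniteMeasureOnCompacts μ]
    (hφ : (fun x => x) =O[𝓟 (tsupport w)] φ)
    (hχ : Continuous χ) (hχc : HasCompactSupport χ)
    (hw : Continuous w) (hwc : HasCompactSupport w) :
    ∃ bound : E → ℝ, Integrable bound μ ∧
      ∀ c : ℝ, 0 < c → ∀ z, ‖χ (c • φ (c⁻¹ • z)) • w (c⁻¹ • z)‖ ≤ bound z := by
  obtain ⟨A, hA, hφA⟩ := hφ.exists_nonneg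
  obtain ⟨R, hR⟩ := hχc.isCompact.isBounded.exists_norm_le
  obtain ⟨M, hM⟩ := hχc.exists_bound_of_continuous hχ
  obtain ⟨N, hN⟩ := hwc.exists_bound_of_continuous hw
  refine ⟨(Metric.closedBall 0 (A * R)).indicator fun _ => M * N, ?_, fun c hc z => ?_⟩
  · have : ProperSpace E := FiniteDimensional.proper_real E
    exact (integrableOn_const measure_closedBall_lt_top.ne).integrable_indicator
      measurableSet_closedBall
  · by_cases hz : χ (c • φ (c⁻¹ • z)) • w (c⁻¹ • z) = 0
    · rw [hz, norm_zero]
      exact indicator_nonneg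
        (fun _ _ => mul_nonneg ((norm_nonneg _).trans (hM 0)) ((norm_nonneg _).trans (hN 0))) z
    · have hz_mem : z ∈ Metric.closedBall 0 (A * R) := mem_closedBall_zero_iff.2 <|
        norm_le_of_comp_rescale_smul_ne_zero hA hc (isBigOWith_principal.1 hφA) hR hz
      rw [indicator_of_mem hz_mem, norm_smul]
      exact mul_le_mul (hM _) (hN _) (norm_nonneg _) ((norm_nonneg _).trans (hM 0))

variable (μ : Measure E) [μ.IsAddHaarMeasure]

theorem integral_comp_continuousLinearMap {L : E →L[ℝ] E} (hL : L.det ≠ 0) (f : E → G) :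
    ∫ x, f (L x) ∂μ = |L.det|⁻¹ • ∫ y, f y ∂μ := by
  let e := (L.toContinuousLinearEquivOfDetNeZero hL).toHomeomorph.toMeasurableEquiv
  have hmap : μ.map e = ENNReal.ofReal |L.det⁻¹| • μ :=
    Measure.map_linearMap_addHaar_eq_smul_addHaar μ hL
  calc ∫ x, f (L x) ∂μ = ∫ y, f y ∂μ.map e := (integral_map_equiv e f).symm
    _ = |L.det|⁻¹ • ∫ y, f y ∂μ := by
      rw [hmap, integral_smul_measure, ENNReal.toReal_ofReal (abs_nonneg _), abs_inv]

theorem tendsto_integral_pow_mul_comp_smul (hφ0 : φ 0 = 0)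
    (hφ : ∀ x ∈ tsupport w, ContinuousAt φ x) (hzero : ∀ x ∈ tsupport w, φ x = 0 → x = 0)
    (hL : HasFDerivAt φ L 0) (hL_ind : IsInducing L)
    (hχ : Continuous χ) (hχc : HasCompactSupport χ)
    (hw : Continuous w) (hwc : HasCompactSupport w) :
    Tendsto (fun c : ℝ => ∫ x, (c ^ finrank ℝ E * χ (c • φ x)) • w x ∂μ) atTop
      (𝓝 (∫ z, χ (L z) • w 0 ∂μ)) := by
  have hφ_bound : (fun x => x) =O[𝓟 (tsupport w)] φ :=
    isBigO_id_principal_of_hasFDerivAt_zero hwc.isCompact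
      (fun x hx => (hφ x hx).continuousWithinAt) hzero hφ0 hL hL_ind
  obtain ⟨bound, hbound_int, hbound⟩ :=
    exists_integrable_bound_comp_rescale_smul μ hφ_bound hχ hχc hw hwc
  have rescaled : Tendsto (fun c : ℝ => ∫ z, χ (c • φ (c⁻¹ • z)) • w (c⁻¹ • z) ∂μ) atTop
      (𝓝 (∫ z, χ (L z) • w 0 ∂μ)) := by
    refine tendsto_integral_filter_of_dominated_convergence bound (.of_forall fun c => ?_) ?_
      hbound_int (.of_forall fun z => tendsto_comp_rescale_smul hφ0 hL hχ hw.continuousAt z)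
    · exact ((continuous_comp_smul_of_tsupport hχ hw hφ c).comp
        (continuous_const_smul c⁻¹)).aestronglyMeasurable
    · filter_upwards [eventually_gt_atTop 0] with c hc
      exact .of_forall (hbound c hc)
  refine rescaled.congr' ?_
  filter_upwards [eventually_ge_atTop 0] with c hc
  rw [Measure.integral_comp_inv_smul_of_nonneg μ (fun x => χ (c • φ x) • w x) hc, ← integral_smul]
  simp only [mul_smul]

theorem stmt15_general [CompleteSpace G] {U : Set E} {φ : E → E} {L : E →L[ℝ] E} {χ : E → ℝ}
    (hwU : tsupport w ⊆ U) (hφ0 : φ 0 = 0)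
    (hφ : ∀ x ∈ tsupport w, ContinuousAt φ x) (hzero : ∀ x ∈ tsupport w, φ x = 0 → x = 0)
    (hL : HasFDerivAt φ L 0) (hdet : L.det ≠ 0)
    (hχ : Continuous χ) (hχc : HasCompactSupport χ)
    (hw : Continuous w) (hwc : HasCompactSupport w) :
    Tendsto (fun c : ℝ => ∫ x in U, (c ^ finrank ℝ E * χ (c • φ x)) • w x ∂μ) atTop
      (𝓝 ((|L.det|⁻¹ * ∫ y, χ y ∂μ) • w 0)) := by
  have hL_ind : IsInducing L := (L.toContinuousLinearEquivOfDetNeZero hdet).toHomeomorph.isInducing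
  have hlim := tendsto_integral_pow_mul_comp_smul μ hφ0 hφ hzero hL hL_ind hχ hχc hw hwc
  rw [integral_smul_const, integral_comp_continuousLinearMap μ hdet, smul_eq_mul] at hlim
  refine hlim.congr fun c => (setIntegral_eq_integral_of_forall_compl_eq_zero fun x hx => ?_).symm
  rw [image_eq_zero_of_notMem_tsupport fun h => hx (hwU h), smul_zero]

end Integral

end Rescaling

/-- Let `U ⊆ ℝⁿ` be open with `0 ∈ U`, and `φ : U → ℝⁿ` an injective `C¹` map with
`φ 0 = 0` and everywhere nonvanishing Jacobian determinant. Let `χ` be continuous with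
compact support and integral `1`, and `w` continuous with compact support contained in
`U`. Then `∫_U kⁿ χ(k φ(x)) w(x) dx → w(0) / |det Dφ(0)|` as `k → ∞`. -/
theorem stmt15 (n : ℕ) (hn : 1 ≤ n)
    (U : Set (Fin n → ℝ)) (hU : IsOpen U) (h0 : (0 : Fin n → ℝ) ∈ U)
    (φ : (Fin n → ℝ) → (Fin n → ℝ)) (hinj : Set.InjOn φ U)
    (Dφ : (Fin n → ℝ) → ((Fin n → ℝ) →L[ℝ] (Fin n → ℝ)))
    (hderiv : ∀ x ∈ U, HasFDerivWithinAt φ (Dφ x) U x)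
    (hDcont : ContinuousOn Dφ U)
    (hφ0 : φ 0 = 0)
    (hdet : ∀ x ∈ U, LinearMap.det ((Dφ x) : (Fin n → ℝ) →ₗ[ℝ] (Fin n → ℝ)) ≠ 0)
    (χ : (Fin n → ℝ) → ℝ) (hχ : Continuous χ) (hχc : HasCompactSupport χ)
    (hχ1 : ∫ y : Fin n → ℝ, χ y = 1)
    (w : (Fin n → ℝ) → ℝ) (hw : Continuous w) (hwc : HasCompactSupport w)
    (hwU : tsupport w ⊆ U) :
    Tendsto (fun k : ℕ => ∫ x in U, (k : ℝ) ^ n * χ ((k : ℝ) • φ x) * w x)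
      atTop
      (nhds (w 0 / |LinearMap.det ((Dφ 0) : (Fin n → ℝ) →ₗ[ℝ] (Fin n → ℝ))|)) := by
  have hderivAt : ∀ x ∈ U, HasFDerivAt φ (Dφ x) x := fun x hx =>
    (hderiv x hx).hasFDerivAt (hU.mem_nhds hx)
  simpa [hχ1, div_eq_inv_mul, ContinuousLinearMap.det, Function.comp_def] using
    (stmt15_general volume hwU hφ0 (fun x hx => (hderivAt x (hwU hx)).continuousAt)
      (fun x hx hx0 => hinj (hwU hx) h0 (hx0.trans hφ0.symm)) (hderivAt 0 h0) (hdet 0 h0)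
      hχ hχc hw hwc).comp tendsto_natCast_atTop_atTop
end
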